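/- arXiv:2308.06130 — 4 statements merged into one kernel-verified Lean document; each statement's English description precedes it below -/
import Mathlib

section
/- Let (a,b,c) be a primitive binary quadratic form with a > 0 of discriminant D, where D < −4 and D ≡ 0 or 1 (mod 4), and let p be an odd prime with gcd(a,p) = 1. Consider the p+1 forms of discriminant D·p²: F_h = (a·p², p·(b+2ah), a·h²+b·h+c) for h = 0, 1, …, p−1, together with F_∞ = (a, b·p, c·p²). Then exactly p − (D/p) of these p+1 forms are primitive, and the primitive ones among them are pairwise inequivalent. -/
/-- A binary quadratic form `(a, b, c)` evaluated at `(x, y)`. -/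
def qfEval (f : ℤ × ℤ × ℤ) (x y : ℤ) : ℤ :=
  f.1 * x ^ 2 + f.2.1 * x * y + f.2.2 * y ^ 2

/-- The discriminant `b² - 4ac` of the form `(a, b, c)`. -/
def qfDisc (f : ℤ × ℤ × ℤ) : ℤ := f.2.1 ^ 2 - 4 * f.1 * f.2.2

/-- The form `(a, b, c)` is primitive if `gcd(a, b, c) = 1`. -/
def IsPrimitiveQF (f : ℤ × ℤ × ℤ) : Prop :=
  Int.gcd (Int.gcd f.1 f.2.1) f.2.2 = 1

/-- `f` is derived from `g` via the matrix `A`, i.e. `f(x,y) = g(A·(x,y)ᵀ)`. -/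
def DerivedVia (f g : ℤ × ℤ × ℤ) (A : Matrix (Fin 2) (Fin 2) ℤ) : Prop :=
  ∀ x y : ℤ, qfEval f x y = qfEval g (A 0 0 * x + A 0 1 * y) (A 1 0 * x + A 1 1 * y)

/-- Two forms are equivalent if one is derived from the other via a determinant-1
integer matrix. -/
def QFEquiv (f g : ℤ × ℤ × ℤ) : Prop :=
  ∃ A : Matrix (Fin 2) (Fin 2) ℤ, A.det = 1 ∧ DerivedVia f g A

/-- The `p + 1` forms of discriminant `D·p²` obtained from `(a, b, c)` by the
representative transformations: `(a·p², p·(b + 2ah), a·h² + b·h + c)` for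
`0 ≤ h ≤ p - 1` (indices `i < p`), and `(a, b·p, c·p²)` (index `i = p`). -/
def derivedForm (a b c : ℤ) (p : ℕ) (i : Fin (p + 1)) : ℤ × ℤ × ℤ :=
  if (i : ℕ) < p then
    (a * (p : ℤ) ^ 2, (p : ℤ) * (b + 2 * a * (i.val : ℤ)),
      a * (i.val : ℤ) ^ 2 + b * (i.val : ℤ) + c)
  else (a, b * (p : ℤ), c * (p : ℤ) ^ 2)

/-!
The forms `F_i` are `f ∘ M_i`, where `f = (a, b, c)` and the `M_i` are matrices of determinant `p`,
no two of which differ by right multiplication by an integer matrix.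

*Inequivalence.* If `F = f ∘ M = f ∘ B` with `det M = det B = n`, then `V = B * adj M` satisfies
`f ∘ V = n² f`, so `V` is multiplication by an element `t + v ω` of the quadratic order of
discriminant `D`. The vectors `w` and `V w` span a parallelogram of area `v f(w)`; as `V M = n B`,
this gives `n ∣ v F(x, y)` for all `x, y`, hence `n ∣ v` when `F` is primitive. Thus `V / n` is a
unit of norm `1` of the order. The only such units are `±1`, so `B = ±M`.

*Count.* Since `f ∘ M ∘ adj M = (det M)² f`, the only prime that can divide the content of `F_i` is
`p`. It does so exactly when `i < p` is a root of `a h² + b h + c` modulo `p`, and there are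
`1 + (D/p)` such roots.
-/

section Content

theorem qfEval_smul (n : ℤ) (f : ℤ × ℤ × ℤ) (x y : ℤ) :
    qfEval (n • f) x y = n * qfEval f x y := by
  simp only [qfEval, Prod.smul_fst, Prod.smul_snd, smul_eq_mul]
  ring

theorem forall_dvd_qfEval_iff {f : ℤ × ℤ × ℤ} {n : ℤ} :
    (∀ x y, n ∣ qfEval f x y) ↔ n ∣ f.1 ∧ n ∣ f.2.1 ∧ n ∣ f.2.2 := by
  constructor
  · intro h
    have hfst : n ∣ f.1 := by simpa [qfEval] using h 1 0
    have hthd : n ∣ f.2.2 := by simpa [qfEval] using h 0 1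
    have hsum : n ∣ f.1 + f.2.1 + f.2.2 := by simpa [qfEval] using h 1 1
    rw [dvd_add_left hthd, dvd_add_right hfst] at hsum
    exact ⟨hfst, hsum, hthd⟩
  · rintro ⟨hfst, hsnd, hthd⟩ x y
    simp only [qfEval, mul_assoc]
    exact ((hfst.mul_right _).add (hsnd.mul_right _)).add (hthd.mul_right _)

theorem isPrimitiveQF_iff_forall_prime {f : ℤ × ℤ × ℤ} :
    IsPrimitiveQF f ↔ ∀ q : ℕ, q.Prime → ¬ ∀ x y, (q : ℤ) ∣ qfEval f x y := by
  simp only [IsPrimitiveQF, forall_dvd_qfEval_iff, Nat.eq_one_iff_not_exists_prime_dvd,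
    ← Int.natCast_dvd_natCast (n := Int.gcd _ _), Int.dvd_coe_gcd_iff, and_assoc]

theorem IsPrimitiveQF.exists_bezout {f : ℤ × ℤ × ℤ} (hf : IsPrimitiveQF f) :
    ∃ r s t : ℤ, r * f.1 + s * f.2.1 + t * f.2.2 = 1 := by
  obtain ⟨u, t, h⟩ := Int.isCoprime_iff_gcd_eq_one.mpr hf
  refine ⟨u * Int.gcdA f.1 f.2.1, u * Int.gcdB f.1 f.2.1, t, ?_⟩
  linear_combination h - u * Int.gcd_eq_gcd_ab f.1 f.2.1

theorem IsPrimitiveQF.dvd_of_forall_dvd_mul_qfEval {f : ℤ × ℤ × ℤ} (hf : IsPrimitiveQF f)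
    {n v : ℤ} (h : ∀ x y, n ∣ v * qfEval f x y) : n ∣ v := by
  simp only [← qfEval_smul] at h
  obtain ⟨hfst, hsnd, hthd⟩ := forall_dvd_qfEval_iff.mp h
  obtain ⟨r, s, t, hbezout⟩ := hf.exists_bezout
  have hv : v = v * f.1 * r + v * f.2.1 * s + v * f.2.2 * t := by
    linear_combination -v * hbezout
  rw [hv]
  exact ((hfst.mul_right r).add (hsnd.mul_right s)).add (hthd.mul_right t)

end Content

section Derived

variable {f g k : ℤ × ℤ × ℤ} {A B M : Matrix (Fin 2) (Fin 2) ℤ}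

theorem DerivedVia.trans (hfg : DerivedVia f g A) (hgk : DerivedVia g k B) :
    DerivedVia f k (B * A) := by
  intro x y
  rw [hfg, hgk]
  simp only [Matrix.mul_apply, Fin.sum_univ_two]
  ring_nf

theorem DerivedVia.adjugate (h : DerivedVia g f M) :
    DerivedVia (M.det ^ 2 • f) g M.adjugate := by
  intro x y
  rw [h, qfEval_smul]
  simp only [qfEval, Matrix.adjugate_fin_two, Matrix.det_fin_two, Matrix.of_apply, Matrix.cons_val',
    Matrix.cons_val_zero, Matrix.cons_val_one, Matrix.cons_val_fin_one]
  ring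

theorem DerivedVia.dvd_det_sq (hf : IsPrimitiveQF f) (h : DerivedVia g f M) {n : ℤ}
    (hn : ∀ x y, n ∣ qfEval g x y) : n ∣ M.det ^ 2 := by
  refine hf.dvd_of_forall_dvd_mul_qfEval fun x y => ?_
  rw [← qfEval_smul, h.adjugate]
  exact hn _ _

end Derived

section Similitudes

/-- The matrix of multiplication by `t + v ω` on the quadratic order attached to the form
`f = (a, b, c)`, where `ω² = b ω - a c`; it multiplies the values of `f` by its determinant. -/
def qfMulMatrix (f : ℤ × ℤ × ℤ) (t v : ℤ) : Matrix (Fin 2) (Fin 2) ℤ :=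
  !![t, -(f.2.2 * v); f.1 * v, t + f.2.1 * v]

variable {f F : ℤ × ℤ × ℤ} {t v : ℤ} {V M B : Matrix (Fin 2) (Fin 2) ℤ}

theorem sq_sub_qfDisc_mul_sq (f : ℤ × ℤ × ℤ) (t v : ℤ) :
    (2 * t + f.2.1 * v) ^ 2 - qfDisc f * v ^ 2 = 4 * (qfMulMatrix f t v).det := by
  simp only [qfDisc, qfMulMatrix, Matrix.det_fin_two_of]
  ring

theorem DerivedVia.entries_proportional (hV : DerivedVia (V.det • f) f V) (hdet : V.det ≠ 0) :
    f.1 * (V 1 1 - V 0 0) = f.2.1 * V 1 0 ∧ f.1 * V 0 1 = -(f.2.2 * V 1 0) ∧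
      f.2.1 * V 0 1 = -(f.2.2 * (V 1 1 - V 0 0)) := by
  have hx := hV 1 0
  have hy := hV 0 1
  have hxy := hV 1 1
  rw [qfEval_smul] at hx hy hxy
  simp only [qfEval] at hx hy hxy
  have hdef := Matrix.det_fin_two V
  generalize V.det = n at *
  have hcancel : ∀ {r s : ℤ}, 2 * n * r = 2 * n * s → r = s :=
    mul_left_cancel₀ (mul_ne_zero two_ne_zero hdet)
  -- For the Gram matrix `G` of `f`, these are the entries of `Vᵀ G = G adj V`.
  refine ⟨hcancel ?_, hcancel ?_, hcancel ?_⟩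
  · linear_combination 2 * V 1 1 * hx - V 1 0 * (hxy - hx - hy) -
      (2 * f.1 * V 0 0 + f.2.1 * V 1 0) * hdef
  · linear_combination 2 * V 0 1 * hx - V 0 0 * (hxy - hx - hy) +
      (f.2.1 * V 0 0 + 2 * f.2.2 * V 1 0) * hdef
  · linear_combination V 0 1 * (hxy - hx - hy) - 2 * V 0 0 * hy +
      (f.2.1 * V 0 1 + 2 * f.2.2 * V 1 1) * hdef

theorem DerivedVia.exists_eq_qfMulMatrix (hf : IsPrimitiveQF f)
    (hV : DerivedVia (V.det • f) f V) (hdet : V.det ≠ 0) : ∃ t v, V = qfMulMatrix f t v := by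
  obtain ⟨hab, hac, hbc⟩ := hV.entries_proportional hdet
  obtain ⟨r, s, u, hbezout⟩ := hf.exists_bezout
  obtain ⟨v, hv⟩ : ∃ v, v = r * V 1 0 + s * (V 1 1 - V 0 0) - u * V 0 1 := ⟨_, rfl⟩
  have h01 : V 0 1 = -(f.2.2 * v) := by
    linear_combination (-V 0 1) * hbezout + r * hac + s * hbc + f.2.2 * hv
  have h10 : V 1 0 = f.1 * v := by
    linear_combination (-V 1 0) * hbezout - s * hab + u * hac - f.1 * hv
  have h11 : V 1 1 = V 0 0 + f.2.1 * v := by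
    linear_combination (V 0 0 - V 1 1) * hbezout + r * hab + u * hbc - f.2.1 * hv
  exact ⟨V 0 0, v, (Matrix.eta_fin_two V).trans (by rw [h01, h10, h11]; rfl)⟩

theorem eq_zero_of_det_qfMulMatrix_eq_sq
    (hPell : ∀ t u : ℤ, t ^ 2 - qfDisc f * u ^ 2 = 4 → u = 0) {n u : ℤ} (hn : n ≠ 0)
    (hdet : (qfMulMatrix f t (n * u)).det = n ^ 2) : u = 0 := by
  have hnorm := sq_sub_qfDisc_mul_sq f t (n * u)
  rw [hdet] at hnorm
  obtain ⟨s, hs⟩ : n ∣ 2 * t + f.2.1 * (n * u) :=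
    (Int.pow_dvd_pow_iff two_ne_zero).mp ⟨4 + qfDisc f * u ^ 2, by linear_combination hnorm⟩
  rw [hs] at hnorm
  exact hPell s u (mul_left_cancel₀ (pow_ne_zero 2 hn) (by linear_combination hnorm))

theorem dvd_mul_qfEval_of_qfMulMatrix_mul_eq_smul {n : ℤ} (hM : DerivedVia F f M)
    (h : qfMulMatrix f t v * M = n • B) (x y : ℤ) : n ∣ v * qfEval F x y := by
  have hn : ∀ i, n ∣ (qfMulMatrix f t v).mulVec (M.mulVec ![x, y]) i := fun i => by
    rw [Matrix.mulVec_mulVec, h, Matrix.smul_mulVec]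
    exact dvd_mul_right _ _
  have hcross : v * qfEval F x y =
      M.mulVec ![x, y] 0 * (qfMulMatrix f t v).mulVec (M.mulVec ![x, y]) 1 -
        M.mulVec ![x, y] 1 * (qfMulMatrix f t v).mulVec (M.mulVec ![x, y]) 0 := by
    rw [hM]
    simp only [qfEval, qfMulMatrix, Matrix.mulVec, dotProduct, Fin.sum_univ_two, Matrix.of_apply,
      Matrix.cons_val', Matrix.cons_val_zero, Matrix.cons_val_one, Matrix.cons_val_fin_one]
    ring
  rw [hcross]
  exact ((hn 1).mul_left _).sub ((hn 0).mul_left _)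

theorem DerivedVia.eq_or_eq_neg (hf : IsPrimitiveQF f) (hF : IsPrimitiveQF F)
    (hPell : ∀ t u : ℤ, t ^ 2 - qfDisc f * u ^ 2 = 4 → u = 0) (hB : DerivedVia F f B)
    (hM : DerivedVia F f M) (hdet : B.det = M.det) (hM0 : M.det ≠ 0) : B = M ∨ B = -M := by
  have hVdet : (B * M.adjugate).det = M.det ^ 2 := by
    rw [Matrix.det_mul, Matrix.det_adjugate, hdet, Fintype.card_fin]; ring
  have hVM : B * M.adjugate * M = M.det • B := by
    rw [Matrix.mul_assoc, Matrix.adjugate_mul, Matrix.mul_smul, Matrix.mul_one]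
  obtain ⟨t, v, hV⟩ := DerivedVia.exists_eq_qfMulMatrix hf (V := B * M.adjugate)
    (hVdet ▸ hM.adjugate.trans hB) (hVdet ▸ pow_ne_zero 2 hM0)
  rw [hV] at hVdet hVM
  obtain ⟨u, rfl⟩ : M.det ∣ v :=
    hF.dvd_of_forall_dvd_mul_qfEval (dvd_mul_qfEval_of_qfMulMatrix_mul_eq_smul hM hVM)
  have hu := eq_zero_of_det_qfMulMatrix_eq_sq hPell hM0 hVdet
  have hscalar : qfMulMatrix f t (M.det * u) = t • 1 := by
    simp [qfMulMatrix, hu, Matrix.one_fin_two, Matrix.smul_of]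
  rw [hscalar, Matrix.smul_mul, Matrix.one_mul] at hVM
  have ht : t = M.det ∨ t = -M.det := by
    rw [hscalar, Matrix.det_smul, Matrix.det_one, Fintype.card_fin, mul_one] at hVdet
    exact sq_eq_sq_iff_eq_or_eq_neg.mp hVdet
  have hcancel : ∀ {X Y : Matrix (Fin 2) (Fin 2) ℤ}, M.det • X = M.det • Y → X = Y :=
    fun h => smul_right_injective _ hM0 h
  rcases ht with ht | ht
  · exact .inl (hcancel (by rw [← hVM, ht]))
  · exact .inr (hcancel (by rw [← hVM, ht, neg_smul, smul_neg]))

end Similitudes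

theorem eq_zero_of_sq_sub_mul_sq_eq_four {D t u : ℤ} (hD : D < -4)
    (h : t ^ 2 - D * u ^ 2 = 4) : u = 0 := by
  by_contra hu
  have hu_sq : 0 < u ^ 2 := by positivity
  have hD_mul : 0 < (-4 - D) * u ^ 2 := mul_pos (by linarith) hu_sq
  linarith [sq_nonneg t]

section Representatives

variable {a b c : ℤ} {p : ℕ} {i j : Fin (p + 1)}

/-- The matrix of determinant `p` that carries `(a, b, c)` to `derivedForm a b c p i`. -/
def repMatrix (p : ℕ) (i : Fin (p + 1)) : Matrix (Fin 2) (Fin 2) ℤ :=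
  if (i : ℕ) < p then !![(p : ℤ), (i.val : ℤ); 0, 1] else !![1, 0; 0, (p : ℤ)]

theorem det_repMatrix (p : ℕ) (i : Fin (p + 1)) : (repMatrix p i).det = p := by
  unfold repMatrix
  split_ifs <;> simp

theorem derivedVia_repMatrix (a b c : ℤ) (p : ℕ) (i : Fin (p + 1)) :
    DerivedVia (derivedForm a b c p i) (a, b, c) (repMatrix p i) := by
  intro x y
  unfold derivedForm repMatrix
  split_ifs
  all_goals
    simp only [qfEval, Matrix.of_apply, Matrix.cons_val', Matrix.cons_val_zero,
      Matrix.cons_val_one, Matrix.cons_val_fin_one]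
    ring

theorem eq_of_repMatrix_mul_eq (hp : 1 < p) {A : Matrix (Fin 2) (Fin 2) ℤ}
    (h : repMatrix p j * A = repMatrix p i) : i = j := by
  have hunit : ∀ k : ℤ, (p : ℤ) * k ≠ 1 := fun k hk => by
    have := Int.isUnit_iff_natAbs_eq.mp (.of_mul_eq_one k hk)
    rw [Int.natAbs_natCast] at this
    exact hp.ne' this
  have hentry : ∀ r s, repMatrix p j r 0 * A 0 s + repMatrix p j r 1 * A 1 s =
      repMatrix p i r s := fun r s => by
    rw [← h, Matrix.mul_apply, Fin.sum_univ_two]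
  have h00 := hentry 0 0
  have h01 := hentry 0 1
  have h10 := hentry 1 0
  have h11 := hentry 1 1
  unfold repMatrix at h00 h01 h10 h11
  split_ifs at h00 h01 h10 h11 with hj hi hi <;>
    simp only [Matrix.of_apply, Matrix.cons_val', Matrix.cons_val_zero, Matrix.cons_val_one,
      Matrix.cons_val_fin_one, one_mul, zero_mul, zero_add] at h00 h01 h10 h11
  · rw [h11, mul_one] at h01
    have hdvd : (p : ℤ) ∣ (i : ℤ) - j := ⟨A 0 1, by linarith⟩
    have := Int.eq_zero_of_abs_lt_dvd hdvd (by rw [abs_lt]; omega)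
    omega
  · rw [h10, mul_zero, add_zero] at h00
    exact absurd h00 (hunit _)
  · exact absurd h11 (hunit _)
  · omega

theorem eq_of_qfEquiv_derivedForm (hf : IsPrimitiveQF (a, b, c))
    (hPell : ∀ t u : ℤ, t ^ 2 - qfDisc (a, b, c) * u ^ 2 = 4 → u = 0) (hp : 1 < p)
    (hi : IsPrimitiveQF (derivedForm a b c p i))
    (h : QFEquiv (derivedForm a b c p i) (derivedForm a b c p j)) : i = j := by
  obtain ⟨A, hA, hij⟩ := h
  have hdet : (repMatrix p j * A).det = (repMatrix p i).det := by
    rw [Matrix.det_mul, hA, mul_one, det_repMatrix, det_repMatrix]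
  have hne : (repMatrix p i).det ≠ 0 := by
    rw [det_repMatrix]
    positivity
  rcases (hij.trans (derivedVia_repMatrix a b c p j)).eq_or_eq_neg hf hi hPell
    (derivedVia_repMatrix a b c p i) hdet hne with hA | hA
  · exact eq_of_repMatrix_mul_eq hp hA
  · exact eq_of_repMatrix_mul_eq (A := -A) hp (by rw [Matrix.mul_neg, hA, neg_neg])

theorem isPrimitiveQF_derivedForm_iff_not_forall_dvd (hf : IsPrimitiveQF (a, b, c)) (hp : p.Prime) :
    IsPrimitiveQF (derivedForm a b c p i) ↔
      ¬ ∀ x y, (p : ℤ) ∣ qfEval (derivedForm a b c p i) x y := by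
  rw [isPrimitiveQF_iff_forall_prime]
  refine ⟨fun h => h p hp, fun h q hq hdvd => h ?_⟩
  have hqp := (derivedVia_repMatrix a b c p i).dvd_det_sq hf hdvd
  rw [det_repMatrix] at hqp
  norm_cast at hqp
  rwa [(Nat.prime_dvd_prime_iff_eq hq hp).mp (hq.dvd_of_dvd_pow hqp)] at hdvd

theorem not_isPrimitiveQF_derivedForm_iff (hf : IsPrimitiveQF (a, b, c)) (hp : p.Prime)
    (hpa : ¬ (p : ℤ) ∣ a) :
    ¬ IsPrimitiveQF (derivedForm a b c p i) ↔
      (i : ℕ) < p ∧ (p : ℤ) ∣ a * (i.val : ℤ) ^ 2 + b * (i.val : ℤ) + c := by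
  rw [isPrimitiveQF_derivedForm_iff_not_forall_dvd hf hp, not_not, forall_dvd_qfEval_iff]
  unfold derivedForm
  split_ifs with hi
  · simp [hi, (dvd_pow_self (p : ℤ) two_ne_zero).mul_left]
  · simp only [hi, hpa, false_and]

end Representatives

section Count

theorem card_quadratic_roots {K : Type*} [Field K] [Fintype K] [DecidableEq K]
    (hK : ringChar K ≠ 2) {a : K} (ha : a ≠ 0) (b c : K) :
    ((Finset.univ.filter fun x : K => a * x ^ 2 + b * x + c = 0).card : ℤ) =
      quadraticChar K (discrim a b c) + 1 := by
  have h2 : (2 : K) ≠ 0 := Ring.two_ne_zero hK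
  have : NeZero (2 : K) := ⟨h2⟩
  rw [← quadraticChar_card_sqrts hK, Nat.cast_inj]
  let e : K ≃ K := (Equiv.mulLeft₀ (2 * a) (mul_ne_zero h2 ha)).trans (Equiv.addRight b)
  refine Finset.card_equiv e fun x => ?_
  simp only [Finset.mem_filter_univ, Set.mem_toFinset, Set.mem_ofPred_eq, sq x]
  rw [quadratic_eq_zero_iff_discrim_eq_sq ha, eq_comm]
  rfl

theorem card_filter_lt_and_zmod (n : ℕ) [NeZero n] (P : ZMod n → Prop) [DecidablePred P] :
    (Finset.univ.filter fun i : Fin (n + 1) => (i : ℕ) < n ∧ P (i.val : ZMod n)).card =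
      (Finset.univ.filter P).card := by
  refine Finset.card_nbij' (fun i => (i.val : ZMod n))
    (fun x => ⟨x.val, x.val_lt.trans n.lt_succ_self⟩) ?_ ?_ ?_ ?_
  · intro i hi
    simpa using (Finset.mem_filter_univ i |>.mp hi).2
  · intro x hx
    simpa [x.val_lt] using hx
  · intro i hi
    exact Fin.ext (ZMod.val_cast_of_lt (Finset.mem_filter_univ i |>.mp hi).1)
  · intro x _
    exact x.natCast_zmod_val

theorem card_isPrimitiveQF_derivedForm {a b c : ℤ} {p : ℕ} [hp : Fact p.Prime] (hp2 : p ≠ 2)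
    (hf : IsPrimitiveQF (a, b, c)) (hpa : ¬ (p : ℤ) ∣ a) :
    (Nat.card {i : Fin (p + 1) // IsPrimitiveQF (derivedForm a b c p i)} : ℤ) =
      p - legendreSym p (qfDisc (a, b, c)) := by
  classical
  let P (i : Fin (p + 1)) : Prop := IsPrimitiveQF (derivedForm a b c p i)
  have hroots : (Finset.univ.filter fun i => ¬ P i).card =
      (Finset.univ.filter fun x : ZMod p => a * x ^ 2 + b * x + c = 0).card := by
    simp only [P, not_isPrimitiveQF_derivedForm_iff hf hp.out hpa,
      ← ZMod.intCast_zmod_eq_zero_iff_dvd]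
    push_cast
    exact card_filter_lt_and_zmod p fun x => a * x ^ 2 + b * x + c = 0
  have hdisc : ((qfDisc (a, b, c) : ℤ) : ZMod p) = discrim (a : ZMod p) b c := by
    simp only [qfDisc, discrim]
    push_cast
    rfl
  have hcount := card_quadratic_roots ((ZMod.ringChar_zmod_n p).trans_ne hp2)
    (mt (ZMod.intCast_zmod_eq_zero_iff_dvd a p).mp hpa) (b : ZMod p) c
  rw [← hroots, ← hdisc] at hcount
  have htotal := Finset.card_filter_add_card_filter_not (s := Finset.univ) P
  rw [Finset.card_univ, Fintype.card_fin] at htotal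
  rw [Nat.card_eq_fintype_card, Fintype.card_subtype, legendreSym]
  zify at htotal
  linarith

end Count

/-- `hPell` says that `±1` are the only units of norm `1` in the quadratic order of discriminant
`D`; it holds when `D < -4` and when `D` is a nonzero square. -/
theorem stmt4_general (a b c : ℤ) (hprim : IsPrimitiveQF (a, b, c))
    (D : ℤ) (hdisc : qfDisc (a, b, c) = D)
    (hPell : ∀ t u : ℤ, t ^ 2 - D * u ^ 2 = 4 → u = 0)
    (p : ℕ) (hp : p.Prime) (hodd : Odd p) (hcop : Int.gcd a (p : ℤ) = 1) :
    (Nat.card {i : Fin (p + 1) // IsPrimitiveQF (derivedForm a b c p i)} : ℤ)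
        = (p : ℤ) - @legendreSym p ⟨hp⟩ D ∧
      ∀ i j : Fin (p + 1), IsPrimitiveQF (derivedForm a b c p i) →
        IsPrimitiveQF (derivedForm a b c p j) → i ≠ j →
        ¬ QFEquiv (derivedForm a b c p i) (derivedForm a b c p j) := by
  subst hdisc
  have : Fact p.Prime := ⟨hp⟩
  have hpa : ¬ (p : ℤ) ∣ a := (Nat.prime_iff_prime_int.mp hp).coprime_iff_not_dvd.mp
    (Int.isCoprime_iff_gcd_eq_one.mpr hcop).symm
  exact ⟨card_isPrimitiveQF_derivedForm (hodd.ne_two_of_dvd_nat dvd_rfl) hprim hpa,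
    fun i j hi _ hij h => hij (eq_of_qfEquiv_derivedForm hprim hPell hp.one_lt hi h)⟩

theorem stmt4 (a b c : ℤ) (ha : 0 < a) (hprim : IsPrimitiveQF (a, b, c))
    (D : ℤ) (hdisc : qfDisc (a, b, c) = D) (hD4 : D < -4)
    (hDmod : D % 4 = 0 ∨ D % 4 = 1)
    (p : ℕ) (hp : p.Prime) (hodd : Odd p) (hcop : Int.gcd a (p : ℤ) = 1) :
    (Nat.card {i : Fin (p + 1) // IsPrimitiveQF (derivedForm a b c p i)} : ℤ)
        = (p : ℤ) - @legendreSym p ⟨hp⟩ D ∧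
      ∀ i j : Fin (p + 1), IsPrimitiveQF (derivedForm a b c p i) →
        IsPrimitiveQF (derivedForm a b c p j) → i ≠ j →
        ¬ QFEquiv (derivedForm a b c p i) (derivedForm a b c p j) :=
  stmt4_general a b c hprim D hdisc (fun _ _ => eq_zero_of_sq_sub_mul_sq_eq_four hD4) p hp hodd hcop
end

section
/- Let D < −4 be an integer with D ≡ 0 or 1 (mod 4), and let p be an odd prime. Then h(D·p²) = h(D) · (p − (D/p)). -/
/-- The class number `h(D)`: the number of equivalence classes of primitive binary
quadratic forms of discriminant `D` with positive leading coefficient. -/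
noncomputable def classNumber (D : ℤ) : ℕ :=
  Nat.card (Quot fun f g : {f : ℤ × ℤ × ℤ // qfDisc f = D ∧ IsPrimitiveQF f ∧ 0 < f.1} =>
    QFEquiv f.1 g.1)

/-!
Restricting a form `f` of discriminant `D` to the `p + 1` sublattices of index `p` in `ℤ²`, that is,
to the points of `P¹(𝔽_p)`, gives forms of discriminant `D p²`. The restriction is primitive exactly
when `f` does not vanish modulo `p` at the corresponding point, and every primitive form of
discriminant `D p²` arises in this way. Two restrictions are equivalent exactly when an equivalence
of the original forms carries one sublattice to the other. For `D < -4` the only automorphs of `f`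
are `±1`, which fix every sublattice. Hence each class of discriminant `D` yields as many classes of
discriminant `D p²` as there are points of `P¹(𝔽_p)` where `f` does not vanish, and a binary
quadratic form over `𝔽_p` has `1 + (D/p)` zeros on the projective line.
-/

open Matrix CongruenceSubgroup
open scoped MatrixGroups

section Substitution

/-- The action of a matrix on forms by linear substitution: the form `g(A·(x,y)ᵀ)`. -/
def qfSubst (g : ℤ × ℤ × ℤ) (A : Matrix (Fin 2) (Fin 2) ℤ) : ℤ × ℤ × ℤ :=
  (qfEval g (A 0 0) (A 1 0),
    2 * g.1 * A 0 0 * A 0 1 + g.2.1 * (A 0 0 * A 1 1 + A 0 1 * A 1 0) + 2 * g.2.2 * A 1 0 * A 1 1,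
    qfEval g (A 0 1) (A 1 1))

theorem qfEval_injective : Function.Injective qfEval := by
  intro f g h
  have hx := congr_fun₂ h 1 0
  have hy := congr_fun₂ h 0 1
  have hxy := congr_fun₂ h 1 1
  simp only [qfEval] at hx hy hxy
  ext <;> linarith

theorem qfEval_qfSubst (g : ℤ × ℤ × ℤ) (A : Matrix (Fin 2) (Fin 2) ℤ) (x y : ℤ) :
    qfEval (qfSubst g A) x y = qfEval g (A 0 0 * x + A 0 1 * y) (A 1 0 * x + A 1 1 * y) := by
  simp only [qfEval, qfSubst]
  ring

theorem derivedVia_iff_qfSubst_eq {f g : ℤ × ℤ × ℤ} {A : Matrix (Fin 2) (Fin 2) ℤ} :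
    DerivedVia f g A ↔ qfSubst g A = f := by
  rw [← qfEval_injective.eq_iff, eq_comm]
  simp only [DerivedVia, ← qfEval_qfSubst, funext_iff]

@[simp]
theorem qfSubst_one (g : ℤ × ℤ × ℤ) : qfSubst g 1 = g := by
  simp [qfSubst, qfEval]

theorem qfSubst_mul (g : ℤ × ℤ × ℤ) (A B : Matrix (Fin 2) (Fin 2) ℤ) :
    qfSubst g (A * B) = qfSubst (qfSubst g A) B := by
  apply qfEval_injective
  ext x y
  simp only [qfEval_qfSubst, mul_apply, Fin.sum_univ_two]
  congr 1 <;> ring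

theorem qfSubst_inv_eq_iff {f g : ℤ × ℤ × ℤ} {A : SL(2, ℤ)} :
    qfSubst g ↑A⁻¹ = f ↔ qfSubst f A = g := by
  constructor <;> rintro rfl <;> rw [← qfSubst_mul, ← Matrix.SpecialLinearGroup.coe_mul] <;> simp

theorem qfEquiv_iff {f g : ℤ × ℤ × ℤ} : QFEquiv f g ↔ ∃ A : SL(2, ℤ), qfSubst g A = f := by
  simp only [QFEquiv, derivedVia_iff_qfSubst_eq]
  exact ⟨fun ⟨A, hA, h⟩ => ⟨⟨A, hA⟩, h⟩, fun ⟨A, h⟩ => ⟨A, A.2, h⟩⟩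

theorem qfEquiv_qfSubst (g : ℤ × ℤ × ℤ) (A : SL(2, ℤ)) : QFEquiv (qfSubst g A) g :=
  qfEquiv_iff.2 ⟨A, rfl⟩

theorem equivalence_qfEquiv : Equivalence QFEquiv where
  refl f := qfEquiv_iff.2 ⟨1, by simp⟩
  symm := by
    simp only [qfEquiv_iff]
    rintro f g ⟨A, h⟩
    exact ⟨A⁻¹, qfSubst_inv_eq_iff.2 h⟩
  trans := by
    simp only [qfEquiv_iff]
    rintro _ _ g ⟨A, rfl⟩ ⟨B, rfl⟩
    exact ⟨B * A, by rw [Matrix.SpecialLinearGroup.coe_mul, qfSubst_mul]⟩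

end Substitution

section Invariants

theorem qfDisc_qfSubst (g : ℤ × ℤ × ℤ) (A : Matrix (Fin 2) (Fin 2) ℤ) :
    qfDisc (qfSubst g A) = qfDisc g * A.det ^ 2 := by
  simp only [qfDisc, qfSubst, qfEval, det_fin_two]
  ring

theorem isPrimitiveQF_iff_exists_bezout {f : ℤ × ℤ × ℤ} :
    IsPrimitiveQF f ↔ ∃ x y z : ℤ, f.1 * x + f.2.1 * y + f.2.2 * z = 1 := by
  rw [IsPrimitiveQF, ← Int.isCoprime_iff_gcd_eq_one]
  constructor
  · rintro ⟨u, v, h⟩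
    rw [Int.gcd_eq_gcd_ab] at h
    exact ⟨u * f.1.gcdA f.2.1, u * f.1.gcdB f.2.1, v, by linear_combination h⟩
  · rintro ⟨x, y, z, h⟩
    obtain ⟨a, ha⟩ := Int.gcd_dvd_left f.1 f.2.1
    obtain ⟨b, hb⟩ := Int.gcd_dvd_right f.1 f.2.1
    exact ⟨a * x + b * y, z, by linear_combination h - x * ha - y * hb⟩

theorem IsPrimitiveQF.of_qfSubst {f : ℤ × ℤ × ℤ} {A : Matrix (Fin 2) (Fin 2) ℤ}
    (h : IsPrimitiveQF (qfSubst f A)) : IsPrimitiveQF f := by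
  obtain ⟨x, y, z, h⟩ := isPrimitiveQF_iff_exists_bezout.1 h
  simp only [qfSubst, qfEval] at h
  exact isPrimitiveQF_iff_exists_bezout.2
    ⟨A 0 0 ^ 2 * x + 2 * A 0 0 * A 0 1 * y + A 0 1 ^ 2 * z,
      A 0 0 * A 1 0 * x + (A 0 0 * A 1 1 + A 0 1 * A 1 0) * y + A 0 1 * A 1 1 * z,
      A 1 0 ^ 2 * x + 2 * A 1 0 * A 1 1 * y + A 1 1 ^ 2 * z, by linear_combination h⟩

theorem IsPrimitiveQF.qfSubst {f : ℤ × ℤ × ℤ} (hf : IsPrimitiveQF f) (A : SL(2, ℤ)) :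
    IsPrimitiveQF (qfSubst f A) := by
  have h : _root_.qfSubst (_root_.qfSubst f A) ↑A⁻¹ = f := qfSubst_inv_eq_iff.2 rfl
  exact .of_qfSubst (h.symm ▸ hf)

theorem qfEval_pos {f : ℤ × ℤ × ℤ} (hD : qfDisc f < 0) (hf : 0 < f.1) {x y : ℤ}
    (hxy : x ≠ 0 ∨ y ≠ 0) : 0 < qfEval f x y := by
  have complete_square :
      4 * f.1 * qfEval f x y = (2 * f.1 * x + f.2.1 * y) ^ 2 + -qfDisc f * y ^ 2 := by
    simp only [qfEval, qfDisc]
    ring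
  suffices 0 < 4 * f.1 * qfEval f x y from (pos_iff_pos_of_mul_pos this).1 (by positivity)
  rw [complete_square]
  have hD' : 0 < -qfDisc f := neg_pos.2 hD
  rcases eq_or_ne y 0 with rfl | hy
  · have hx : x ≠ 0 := by simpa using hxy
    have : 2 * f.1 * x ≠ 0 := by positivity
    simpa using sq_pos_of_ne_zero this
  · positivity

end Invariants

section Automorphs

/- The three `2 × 2` minors of the pair of triples `(A₁₀, A₁₁ - A₀₀, -A₀₁)` and `f` vanish when
`A` fixes `f`, and a primitive `f` divides every triple proportional to it. -/
theorem exists_eq_mul_of_qfSubst_eq_self {f : ℤ × ℤ × ℤ} (hf : IsPrimitiveQF f) (hf0 : f.1 ≠ 0)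
    {A : SL(2, ℤ)} (h : qfSubst f A = f) :
    ∃ u, A 1 0 = f.1 * u ∧ A 1 1 - A 0 0 = f.2.1 * u ∧ A 0 1 = -(f.2.2 * u) := by
  obtain ⟨x, y, z, bezout⟩ := isPrimitiveQF_iff_exists_bezout.1 hf
  have hdet : A 0 0 * A 1 1 - A 0 1 * A 1 0 = 1 := (det_fin_two _).symm.trans A.det_coe
  have h1 : qfEval f (A 0 0) (A 1 0) = f.1 := congr_arg Prod.fst h
  have h2 : (qfSubst f A).2.1 = f.2.1 := congr_arg (·.2.1) h
  have h3 : qfEval f (A 0 1) (A 1 1) = f.2.2 := congr_arg (·.2.2) h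
  simp only [qfSubst, qfEval] at h1 h2 h3
  have minor_ab : f.1 * (A 1 1 - A 0 0) = f.2.1 * A 1 0 := by
    apply mul_left_cancel₀ (two_ne_zero (α := ℤ))
    linear_combination -2 * A 1 1 * h1 + A 1 0 * h2 + (2 * f.1 * A 0 0 + f.2.1 * A 1 0) * hdet
  have minor_ac : f.1 * A 0 1 = -(f.2.2 * A 1 0) := by
    apply mul_left_cancel₀ (two_ne_zero (α := ℤ))
    linear_combination A 1 1 * h2 - 2 * A 1 0 * h3 - (2 * f.1 * A 0 1 + f.2.1 * A 1 1) * hdet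
  have hγ : A 1 0 = f.1 * (A 1 0 * x + (A 1 1 - A 0 0) * y - A 0 1 * z) := by
    linear_combination (-A 1 0) * bezout - y * minor_ab + z * minor_ac
  refine ⟨_, hγ, ?_, ?_⟩ <;> apply mul_left_cancel₀ hf0
  · linear_combination minor_ab + f.2.1 * hγ
  · linear_combination minor_ac - f.2.2 * hγ

theorem eq_one_or_eq_neg_one_of_qfSubst_eq_self {f : ℤ × ℤ × ℤ} (hD : qfDisc f < -4)
    (hf : IsPrimitiveQF f) {A : SL(2, ℤ)} (h : qfSubst f A = f) : A = 1 ∨ A = -1 := by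
  have hf0 : f.1 ≠ 0 := by
    intro h0
    simp only [qfDisc, h0] at hD
    nlinarith [sq_nonneg f.2.1]
  obtain ⟨u, hγ, hδ, hβ⟩ := exists_eq_mul_of_qfSubst_eq_self hf hf0 h
  have hdet : A 0 0 * A 1 1 - A 0 1 * A 1 0 = 1 := (det_fin_two _).symm.trans A.det_coe
  have pell : (A 0 0 + A 1 1) ^ 2 + -qfDisc f * u ^ 2 = 4 := by
    simp only [qfDisc]
    linear_combination 4 * hdet - 4 * f.2.2 * u * hγ + (A 1 1 - A 0 0 + f.2.1 * u) * hδ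
      + 4 * A 1 0 * hβ
  obtain rfl : u = 0 := by
    by_contra hu
    have : 0 < u ^ 2 := by positivity
    nlinarith [sq_nonneg (A 0 0 + A 1 1)]
  simp only [mul_zero, neg_zero] at hγ hδ hβ
  have hδα : A 1 1 = A 0 0 := sub_eq_zero.1 hδ
  rw [hδα, hβ, zero_mul, sub_zero] at hdet
  refine (mul_self_eq_one_iff.1 hdet).imp (fun hα => ?_) fun hα => ?_ <;>
    ext i j <;> fin_cases i <;> fin_cases j <;> simp [hα, hβ, hγ, hδα]

end Automorphs

section Scaling

/-- The form `f(x, m y)`, that is, the restriction of `f` to the sublattice `ℤ × mℤ` of index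
`m`. -/
def qfScaleSnd (m : ℤ) (f : ℤ × ℤ × ℤ) : ℤ × ℤ × ℤ :=
  (f.1, m * f.2.1, m ^ 2 * f.2.2)

theorem qfScaleSnd_eq_qfSubst (m : ℤ) (f : ℤ × ℤ × ℤ) :
    qfScaleSnd m f = qfSubst f !![1, 0; 0, m] := by
  simp [qfScaleSnd, qfSubst, qfEval, mul_comm]

theorem qfScaleSnd_injective {m : ℤ} (hm : m ≠ 0) : Function.Injective (qfScaleSnd m) := by
  simp [Function.Injective, qfScaleSnd, hm]

theorem qfDisc_qfScaleSnd (m : ℤ) (f : ℤ × ℤ × ℤ) :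
    qfDisc (qfScaleSnd m f) = qfDisc f * m ^ 2 := by
  rw [qfScaleSnd_eq_qfSubst, qfDisc_qfSubst]
  simp

theorem IsPrimitiveQF.of_qfScaleSnd {m : ℤ} {f : ℤ × ℤ × ℤ} (h : IsPrimitiveQF (qfScaleSnd m f)) :
    IsPrimitiveQF f :=
  .of_qfSubst (qfScaleSnd_eq_qfSubst m f ▸ h)

theorem IsPrimitiveQF.qfScaleSnd {m : ℤ} {f : ℤ × ℤ × ℤ} (hf : IsPrimitiveQF f)
    (hm : IsCoprime m f.1) : IsPrimitiveQF (qfScaleSnd m f) := by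
  obtain ⟨x, y, z, bezout⟩ := isPrimitiveQF_iff_exists_bezout.1 hf
  obtain ⟨v, u, hvu⟩ := hm.pow_left (m := 2)
  exact isPrimitiveQF_iff_exists_bezout.2
    ⟨v * m ^ 2 * x + u, v * m * y, v * z, by
      simp only [_root_.qfScaleSnd]
      linear_combination v * m ^ 2 * bezout + hvu⟩

theorem qfScaleSnd_qfSubst (m : ℤ) (f : ℤ × ℤ × ℤ) (a b c d : ℤ) :
    qfScaleSnd m (qfSubst f !![a, b; m * c, d]) = qfSubst (qfScaleSnd m f) !![a, m * b; c, d] := by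
  simp only [qfScaleSnd_eq_qfSubst, ← qfSubst_mul]
  simp [mul_comm]

end Scaling

section Gamma0

variable {m : ℕ} {f g : ℤ × ℤ × ℤ} {A : SL(2, ℤ)}

theorem mem_Gamma0_iff_dvd : A ∈ Gamma0 m ↔ (m : ℤ) ∣ A 1 0 := by
  rw [Gamma0_mem, ZMod.intCast_zmod_eq_zero_iff_dvd]

theorem isCoprime_qfSubst_fst_of_mem_Gamma0 (hA : A ∈ Gamma0 m) (hf : IsCoprime (m : ℤ) f.1) :
    IsCoprime (m : ℤ) (qfSubst f A).1 := by
  obtain ⟨c, hc⟩ := mem_Gamma0_iff_dvd.1 hA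
  have hdet : A 0 0 * A 1 1 - A 0 1 * A 1 0 = 1 := (det_fin_two _).symm.trans A.det_coe
  have hα : IsCoprime (m : ℤ) (A 0 0) :=
    ⟨-A 0 1 * c, A 1 1, by linear_combination hdet + A 0 1 * hc⟩
  have expand : (qfSubst f A).1 =
      f.1 * A 0 0 ^ 2 + m * (c * (f.2.1 * A 0 0 + f.2.2 * A 1 0)) := by
    simp only [qfSubst, qfEval]
    linear_combination (f.2.1 * A 0 0 + f.2.2 * A 1 0) * hc
  rw [expand]
  exact (hf.mul_right hα.pow_right).add_mul_left_right _

theorem qfEquiv_qfScaleSnd_of_mem_Gamma0 (hA : A ∈ Gamma0 m) :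
    QFEquiv (qfScaleSnd m (qfSubst f A)) (qfScaleSnd m f) := by
  obtain ⟨c, hc⟩ := mem_Gamma0_iff_dvd.1 hA
  have hA' : (A : Matrix (Fin 2) (Fin 2) ℤ) = !![A 0 0, A 0 1; m * c, A 1 1] := by
    rw [← hc, ← eta_fin_two]
  refine ⟨!![A 0 0, m * A 0 1; c, A 1 1], ?_, derivedVia_iff_qfSubst_eq.2 ?_⟩
  · have hdet := A.det_coe
    rw [hA', det_fin_two_of] at hdet
    rw [det_fin_two_of]
    linear_combination hdet
  · rw [hA', qfScaleSnd_qfSubst]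
    rfl

theorem exists_mem_Gamma0_of_qfEquiv_qfScaleSnd (hg : IsCoprime (m : ℤ) (2 * g.1))
    (h : QFEquiv (qfScaleSnd m f) (qfScaleSnd m g)) :
    ∃ A ∈ Gamma0 m, qfSubst g A = f := by
  obtain ⟨A, hA⟩ := qfEquiv_iff.1 h
  have h3 : qfEval (qfScaleSnd m g) (A 0 1) (A 1 1) = m ^ 2 * f.2.2 := congr_arg (·.2.2) hA
  -- Completing the square: the square below is `4 * g.1` times the third coefficient mod `m ^ 2`.
  have square_dvd : (m : ℤ) ^ 2 ∣ (2 * g.1 * A 0 1 + m * (g.2.1 * A 1 1)) ^ 2 := by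
    refine ⟨4 * g.1 * (f.2.2 - g.2.2 * A 1 1 ^ 2) + (g.2.1 * A 1 1) ^ 2, ?_⟩
    simp only [qfEval, qfScaleSnd] at h3
    linear_combination 4 * g.1 * h3
  obtain ⟨b, hb⟩ : (m : ℤ) ∣ A 0 1 := by
    refine hg.dvd_of_dvd_mul_left ?_
    exact (dvd_add_left (dvd_mul_right _ _)).1 ((Int.pow_dvd_pow_iff two_ne_zero).1 square_dvd)
  have hA' : (A : Matrix (Fin 2) (Fin 2) ℤ) = !![A 0 0, m * b; A 1 0, A 1 1] := by
    rw [← hb, ← eta_fin_two]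
  have hdet : det !![A 0 0, b; m * A 1 0, A 1 1] = 1 := by
    have hdet := A.det_coe
    rw [hA', det_fin_two_of] at hdet
    rw [det_fin_two_of]
    linear_combination hdet
  refine ⟨⟨_, hdet⟩, mem_Gamma0_iff_dvd.2 (dvd_mul_right _ _), ?_⟩
  have hm : (m : ℤ) ≠ 0 := by
    intro hm
    rw [hm, isCoprime_zero_left] at hg
    exact absurd (isUnit_of_mul_isUnit_left hg) (by decide)
  apply qfScaleSnd_injective hm
  rw [hA'] at hA
  exact (qfScaleSnd_qfSubst m g _ _ _ _).trans hA

end Gamma0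

section Descent

theorem isCoprime_two_mul_of_odd {p : ℕ} (hp : Odd p) {n : ℤ} (hn : IsCoprime (p : ℤ) n) :
    IsCoprime (p : ℤ) (2 * n) :=
  (Nat.isCoprime_iff_coprime.2 (Nat.coprime_two_right.2 hp)).mul_right hn

theorem exists_isCoprime_qfSubst_fst {p : ℤ} (hp : Prime p) {f : ℤ × ℤ × ℤ}
    (hf : IsPrimitiveQF f) : ∃ A : SL(2, ℤ), IsCoprime p (qfSubst f A).1 := by
  obtain ⟨x, y, z, bezout⟩ := isPrimitiveQF_iff_exists_bezout.1 hf
  simp only [hp.coprime_iff_not_dvd]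
  by_contra! h
  have ha : p ∣ f.1 := by simpa [qfSubst, qfEval] using h 1
  have hc : p ∣ f.2.2 := by simpa [qfSubst, qfEval, ModularGroup.coe_S] using h ModularGroup.S
  have habc : p ∣ f.1 + f.2.1 + f.2.2 := by
    simpa [qfSubst, qfEval, ModularGroup.coe_T, ModularGroup.coe_S] using
      h (ModularGroup.T * ModularGroup.S)
  have hb : p ∣ f.2.1 := by simpa [ha, hc, dvd_add_left, dvd_add_right] using habc
  exact hp.not_dvd_one (bezout ▸
    dvd_add (dvd_add (ha.mul_right x) (hb.mul_right y)) (hc.mul_right z))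

theorem exists_qfEquiv_qfScaleSnd {m : ℤ} {g : ℤ × ℤ × ℤ} (hm : IsCoprime m (2 * g.1))
    (hD : m ^ 2 ∣ qfDisc g) : ∃ f, f.1 = g.1 ∧ QFEquiv (qfScaleSnd m f) g := by
  obtain ⟨u, v, huv⟩ := id hm
  have hfst : (qfSubst g ↑(ModularGroup.T ^ (-v * g.2.1))).1 = g.1 := by
    simp [qfSubst, qfEval, ModularGroup.coe_T_zpow]
  have hsnd : (qfSubst g ↑(ModularGroup.T ^ (-v * g.2.1))).2.1 = m * (u * g.2.1) := by
    simp only [qfSubst, ModularGroup.coe_T_zpow, of_apply, cons_val', cons_val_zero, cons_val_one,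
      cons_val_fin_one]
    linear_combination -g.2.1 * huv
  set f := qfSubst g ↑(ModularGroup.T ^ (-v * g.2.1)) with hf
  obtain ⟨c, hc⟩ : m ^ 2 ∣ f.2.2 := by
    have hDf : m ^ 2 ∣ qfDisc f := by
      rwa [hf, qfDisc_qfSubst, Matrix.SpecialLinearGroup.det_coe, one_pow, mul_one]
    rw [qfDisc, hfst, hsnd, mul_pow] at hDf
    refine (hm.pow (m := 2) (n := 2)).dvd_of_dvd_mul_left ?_
    convert ((dvd_sub_right (dvd_mul_right _ _)).1 hDf).mul_left g.1 using 1
    ring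
  have hscale : f = qfScaleSnd m (g.1, u * g.2.1, c) := by
    ext <;> assumption
  exact ⟨(g.1, u * g.2.1, c), rfl, hscale ▸ qfEquiv_qfSubst g _⟩

end Descent

section Counting

/-- The value of the binary quadratic form `(a, b, c)` at a point of the projective line over a
field `R`. Points are encoded as `Option R`, with `none` for `(1 : 0)` and `some x` for `(x : 1)`,
and the form is evaluated at these representatives. -/
def projEval {R : Type*} [Semiring R] (a b c : R) : Option R → R
  | none => a
  | some x => a * (x * x) + b * x + c

theorem natCast_card_sigma_of_card_eq {α R : Type*} {β : α → Type*} [Semiring R] [CharZero R]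
    [∀ a, Finite (β a)] {r : R} (h : ∀ a, (Nat.card (β a) : R) = r) :
    (Nat.card (Σ a, β a) : R) = Nat.card α * r := by
  rcases isEmpty_or_nonempty α with _ | ⟨⟨a₀⟩⟩
  · simp
  have hcard (a : α) : Nat.card (β a) = Nat.card (β a₀) :=
    Nat.cast_injective (R := R) ((h a).trans (h a₀).symm)
  have e (a : α) : β a ≃ β a₀ := (Finite.card_eq.1 (hcard a)).some
  rw [Nat.card_congr ((Equiv.sigmaCongrRight e).trans (Equiv.sigmaEquivProd _ _)), Nat.card_prod,
    Nat.cast_mul, h]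

open Finset

variable {F : Type*} [Field F] [Fintype F] [DecidableEq F] {a b c : F}

theorem card_quadratic_roots_s5 (hF : ringChar F ≠ 2) (ha : a ≠ 0) :
    (#{x : F | a * (x * x) + b * x + c = 0} : ℤ) = quadraticChar F (discrim a b c) + 1 := by
  have h2 : (2 : F) ≠ 0 := Ring.two_ne_zero hF
  have : NeZero (2 : F) := ⟨h2⟩
  rw [← quadraticChar_card_sqrts hF, Nat.cast_inj]
  refine card_equiv ((Equiv.mulLeft₀ (2 * a) (mul_ne_zero h2 ha)).trans (Equiv.addRight b)) ?_
  simp [quadratic_eq_zero_iff_discrim_eq_sq ha, eq_comm]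

theorem card_projective_roots (hF : ringChar F ≠ 2) (h : a ≠ 0 ∨ b ≠ 0 ∨ c ≠ 0) :
    (#{i | projEval a b c i = 0} : ℤ) =
      quadraticChar F (discrim a b c) + 1 := by
  have card_split : #{i | projEval a b c i = 0} =
      (if a = 0 then 1 else 0) + #{x : F | a * (x * x) + b * x + c = 0} := by
    rw [card_filter, card_filter, Fintype.sum_option]
    rfl
  rw [card_split]
  rcases ne_or_eq a 0 with ha | rfl
  · simp [ha, card_quadratic_roots_s5 hF ha]
  rcases ne_or_eq b 0 with hb | rfl
  · have linear_root (x : F) : b * x + c = 0 ↔ x = -c / b := by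
      rw [eq_div_iff hb, add_eq_zero_iff_eq_neg, mul_comm]
    simp [linear_root, discrim, quadraticChar_sq_one' hb, filter_eq']
  · have hc : c ≠ 0 := by simpa using h
    simp [discrim, hc]

theorem card_projective_nonroots (hF : ringChar F ≠ 2) (h : a ≠ 0 ∨ b ≠ 0 ∨ c ≠ 0) :
    (#{i | projEval a b c i ≠ 0} : ℤ) =
      Fintype.card F - quadraticChar F (discrim a b c) := by
  have total := card_filter_add_card_filter_not (s := univ)
    fun i : Option F => projEval a b c i = 0
  rw [card_univ, Fintype.card_option] at total
  have roots := card_projective_roots hF h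
  zify at total
  linarith

end Counting

section CosetRep

/-- Representatives of the left cosets of `Γ₀(p)` in `SL(2, ℤ)` for a prime `p`. A coset is the
point of the projective line over `ZMod p` given by the first column of its matrices; `none` stands
for `(1 : 0)` and `some j` for `(j : 1)`. -/
def cosetRep (p : ℕ) : Option (ZMod p) → SL(2, ℤ)
  | none => 1
  | some j => ModularGroup.T ^ (j.cast : ℤ) * ModularGroup.S

theorem coe_cosetRep_some {p : ℕ} (j : ZMod p) :
    (cosetRep p (some j) : Matrix (Fin 2) (Fin 2) ℤ) = !![j.cast, -1; 1, 0] := by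
  simp [cosetRep, ModularGroup.coe_T_zpow, ModularGroup.coe_S]

theorem cosetRep_some_inv_mul_mem_Gamma0_iff {p : ℕ} {j : ZMod p} {A : SL(2, ℤ)} :
    (cosetRep p (some j))⁻¹ * A ∈ Gamma0 p ↔ (A 0 0 : ZMod p) = j * A 1 0 := by
  rw [Gamma0_mem, Matrix.SpecialLinearGroup.coe_mul, Matrix.SpecialLinearGroup.coe_inv,
    coe_cosetRep_some, adjugate_fin_two_of]
  simp [mul_apply, neg_add_eq_zero]

theorem existsUnique_cosetRep_inv_mul_mem_Gamma0 (p : ℕ) [Fact p.Prime] (A : SL(2, ℤ)) :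
    ∃! i, (cosetRep p i)⁻¹ * A ∈ Gamma0 p := by
  by_cases hγ : (A 1 0 : ZMod p) = 0
  · refine ⟨none, by simpa [cosetRep] using hγ, ?_⟩
    rintro (_ | j) hj
    · rfl
    · rw [cosetRep_some_inv_mul_mem_Gamma0_iff, hγ, mul_zero] at hj
      have hdet := congr_arg (Int.cast : ℤ → ZMod p) ((det_fin_two _).symm.trans A.det_coe)
      push_cast at hdet
      simp [hγ, hj] at hdet
  · refine ⟨some (A 0 0 / A 1 0), ?_, ?_⟩
    · exact cosetRep_some_inv_mul_mem_Gamma0_iff.2 (div_mul_cancel₀ _ hγ).symm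
    · rintro (_ | j) hj
      · simp [cosetRep, hγ] at hj
      · rw [eq_div_iff hγ |>.2 (cosetRep_some_inv_mul_mem_Gamma0_iff.1 hj).symm]

theorem intCast_qfSubst_cosetRep_fst {p : ℕ} (f : ℤ × ℤ × ℤ) (i : Option (ZMod p)) :
    ((qfSubst f (cosetRep p i)).1 : ZMod p) =
      projEval (f.1 : ZMod p) f.2.1 f.2.2 i := by
  cases i with
  | none => simp [projEval, cosetRep]
  | some j => simp [projEval, qfSubst, qfEval, coe_cosetRep_some, sq]

theorem card_isCoprime_qfSubst_cosetRep {p : ℕ} [Fact p.Prime] (hp : p ≠ 2) {f : ℤ × ℤ × ℤ}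
    (hf : IsPrimitiveQF f) :
    (Nat.card {i // IsCoprime (p : ℤ) (qfSubst f (cosetRep p i)).1} : ℤ) =
      p - legendreSym p (qfDisc f) := by
  have hF : ringChar (ZMod p) ≠ 2 := by rwa [ZMod.ringChar_zmod_n]
  have hcoeff : (f.1 : ZMod p) ≠ 0 ∨ (f.2.1 : ZMod p) ≠ 0 ∨ (f.2.2 : ZMod p) ≠ 0 := by
    by_contra! h
    obtain ⟨x, y, z, bezout⟩ := isPrimitiveQF_iff_exists_bezout.1 hf
    have bezout_mod := congr_arg (Int.cast : ℤ → ZMod p) bezout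
    push_cast at bezout_mod
    simp [h] at bezout_mod
  simp_rw [← ZMod.coe_int_isUnit_iff_isCoprime, isUnit_iff_ne_zero, intCast_qfSubst_cosetRep_fst]
  rw [Nat.card_eq_fintype_card, Fintype.card_subtype, card_projective_nonroots hF hcoeff,
    ZMod.card, legendreSym]
  simp [qfDisc, discrim]

end CosetRep

section Classes

/-- The positive definite primitive forms of discriminant `D` (for `D < 0`, positive definiteness
amounts to a positive leading coefficient). -/
abbrev PrimitiveForm (D : ℤ) : Type :=
  {f : ℤ × ℤ × ℤ // qfDisc f = D ∧ IsPrimitiveQF f ∧ 0 < f.1}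

/-- The equivalence classes of forms of discriminant `D` that are counted by `classNumber D`. -/
abbrev FormClass (D : ℤ) : Type :=
  Quot fun f g : PrimitiveForm D => QFEquiv f.1 g.1

theorem FormClass.mk_eq_mk_iff {D : ℤ} {f g : PrimitiveForm D} :
    (Quot.mk _ f : FormClass D) = Quot.mk _ g ↔ QFEquiv f.1 g.1 :=
  Quot.eq.trans (equivalence_qfEquiv.comap Subtype.val).eqvGen_iff

theorem FormClass.exists_qfSubst_out_eq {D : ℤ} (f : PrimitiveForm D) :
    ∃ A : SL(2, ℤ), qfSubst (Quot.mk _ f : FormClass D).out.1 A = f.1 :=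
  qfEquiv_iff.1 (FormClass.mk_eq_mk_iff.1 (Quot.out_eq _).symm)

/-- Substitution of an element of `SL(2, ℤ)` into a form of negative discriminant. -/
def PrimitiveForm.subst {D : ℤ} (hD : D < 0) (f : PrimitiveForm D) (A : SL(2, ℤ)) :
    PrimitiveForm D where
  val := qfSubst f.1 A
  property := by
    obtain ⟨hdisc, hprim, hpos⟩ := f.2
    refine ⟨by simp [qfDisc_qfSubst, hdisc], hprim.qfSubst A, ?_⟩
    refine qfEval_pos (hdisc.trans_lt hD) hpos (not_and_or.1 fun ⟨hα, hγ⟩ => ?_)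
    exact zero_ne_one (by rw [← A.det_coe, det_fin_two, hα, hγ, zero_mul, mul_zero, sub_zero])

/-- The restriction `f(x, m y)` as a form of discriminant `D * m ^ 2`. -/
def PrimitiveForm.scaleSnd {D m : ℤ} (f : PrimitiveForm D) (hm : IsCoprime m f.1.1) :
    PrimitiveForm (D * m ^ 2) where
  val := qfScaleSnd m f.1
  property := ⟨by rw [qfDisc_qfScaleSnd, f.2.1], f.2.2.1.qfScaleSnd hm, f.2.2.2⟩

theorem exists_primitiveForm_qfEquiv_qfScaleSnd {D : ℤ} (hD : D < 0) {p : ℕ} [Fact p.Prime]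
    (hp : Odd p) (g : PrimitiveForm (D * p ^ 2)) :
    ∃ f : PrimitiveForm D, IsCoprime (p : ℤ) f.1.1 ∧ QFEquiv (qfScaleSnd p f.1) g.1 := by
  have hprime : Prime (p : ℤ) := Nat.prime_iff_prime_int.1 Fact.out
  have hp2 : (p : ℤ) ^ 2 ≠ 0 := pow_ne_zero 2 hprime.ne_zero
  have hDp : D * p ^ 2 < 0 := mul_neg_of_neg_of_pos hD (by positivity)
  obtain ⟨A, hA⟩ := exists_isCoprime_qfSubst_fst hprime g.2.2.1
  obtain ⟨hdisc, hprim, hpos⟩ := (g.subst hDp A).2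
  obtain ⟨f, hfst, hf⟩ := exists_qfEquiv_qfScaleSnd (isCoprime_two_mul_of_odd hp hA)
    (Dvd.intro_left D hdisc.symm)
  obtain ⟨B, hB⟩ := qfEquiv_iff.1 hf
  have hdisc_f : qfDisc f = D := by
    apply mul_right_cancel₀ hp2
    rw [← qfDisc_qfScaleSnd, ← hB, qfDisc_qfSubst, B.det_coe, one_pow, mul_one]
    exact hdisc
  have hprim_f : IsPrimitiveQF f := .of_qfScaleSnd (hB ▸ hprim.qfSubst B)
  exact ⟨⟨f, hdisc_f, hprim_f, hfst.symm ▸ hpos⟩, hfst.symm ▸ hA,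
    equivalence_qfEquiv.trans hf (qfEquiv_qfSubst _ _)⟩

/-- The class of discriminant `D * p ^ 2` attached to a class of discriminant `D` and a point of
the projective line over `ZMod p` at which a representative of this class does not vanish. -/
noncomputable def FormClass.restrict {D : ℤ} (hD : D < 0) (p : ℕ)
    (x : Σ q : FormClass D, {i // IsCoprime (p : ℤ) (qfSubst q.out.1 (cosetRep p i)).1}) :
    FormClass (D * p ^ 2) :=
  Quot.mk _ ((x.1.out.subst hD (cosetRep p x.2)).scaleSnd x.2.2)

theorem FormClass.restrict_injective {D : ℤ} (hD : D < -4) {p : ℕ} [Fact p.Prime] (hp : Odd p) :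
    Function.Injective (FormClass.restrict (show D < 0 by linarith) p) := by
  rintro ⟨q, i, hi⟩ ⟨r, j, hj⟩ h
  obtain ⟨B, hB, hBf⟩ := exists_mem_Gamma0_of_qfEquiv_qfScaleSnd (isCoprime_two_mul_of_odd hp hj)
    (FormClass.mk_eq_mk_iff.1 h)
  have hsubst : qfSubst r.out.1 ↑(cosetRep p j * B * (cosetRep p i)⁻¹) = q.out.1 := by
    rw [Matrix.SpecialLinearGroup.coe_mul, Matrix.SpecialLinearGroup.coe_mul, qfSubst_mul,
      qfSubst_mul]
    exact (congr_arg (qfSubst · _) hBf).trans (qfSubst_inv_eq_iff.2 rfl)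
  obtain rfl : q = r := by
    rw [← Quot.out_eq q, ← Quot.out_eq r, FormClass.mk_eq_mk_iff]
    exact qfEquiv_iff.2 ⟨_, hsubst⟩
  have hmem : (cosetRep p j)⁻¹ * cosetRep p i ∈ Gamma0 p := by
    obtain ⟨hdisc, hprim, -⟩ := q.out.2
    rcases eq_one_or_eq_neg_one_of_qfSubst_eq_self (hdisc.trans_lt hD) hprim hsubst with h1 | h1
    · rwa [← mul_inv_eq_one.1 h1, inv_mul_cancel_left]
    · have hneg : cosetRep p i = cosetRep p j * -B := by
        rw [mul_neg, mul_inv_eq_iff_eq_mul.1 h1, neg_one_mul, neg_neg]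
      rw [hneg, inv_mul_cancel_left, Gamma0_mem]
      simpa using hB
  obtain rfl : j = i := (existsUnique_cosetRep_inv_mul_mem_Gamma0 p (cosetRep p i)).unique hmem
    (by rw [inv_mul_cancel]; exact one_mem _)
  rfl

theorem FormClass.restrict_surjective {D : ℤ} (hD : D < 0) {p : ℕ} [Fact p.Prime] (hp : Odd p) :
    Function.Surjective (FormClass.restrict hD p) := by
  rintro ⟨g⟩
  obtain ⟨f, hf, hfg⟩ := exists_primitiveForm_qfEquiv_qfScaleSnd hD hp g
  obtain ⟨A, hA⟩ := FormClass.exists_qfSubst_out_eq f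
  set h := (Quot.mk _ f : FormClass D).out
  obtain ⟨i, hi, -⟩ := existsUnique_cosetRep_inv_mul_mem_Gamma0 p A
  have hif : qfSubst (qfSubst h.1 (cosetRep p i)) ↑((cosetRep p i)⁻¹ * A) = f.1 := by
    rw [← qfSubst_mul, ← Matrix.SpecialLinearGroup.coe_mul, mul_inv_cancel_left, hA]
  have hcoprime : IsCoprime (p : ℤ) (qfSubst h.1 (cosetRep p i)).1 := by
    rw [← qfSubst_inv_eq_iff.2 hif]
    exact isCoprime_qfSubst_fst_of_mem_Gamma0 (inv_mem hi) hf
  refine ⟨⟨Quot.mk _ f, i, hcoprime⟩, FormClass.mk_eq_mk_iff.2 ?_⟩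
  have hscale := qfEquiv_qfScaleSnd_of_mem_Gamma0 (f := qfSubst h.1 (cosetRep p i)) hi
  rw [hif] at hscale
  exact equivalence_qfEquiv.trans (equivalence_qfEquiv.symm hscale) hfg

end Classes

theorem stmt5 (D : ℤ) (hD4 : D < -4) (hDmod : D % 4 = 0 ∨ D % 4 = 1)
    (p : ℕ) (hp : p.Prime) (hodd : Odd p) :
    (classNumber (D * (p : ℤ) ^ 2) : ℤ)
      = (classNumber D : ℤ) * ((p : ℤ) - @legendreSym p ⟨hp⟩ D) := by
  have : Fact p.Prime := ⟨hp⟩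
  have hbij : Function.Bijective (FormClass.restrict (by linarith) p) :=
    ⟨FormClass.restrict_injective hD4 hodd, FormClass.restrict_surjective _ hodd⟩
  have hcount (q : FormClass D) :
      (Nat.card {i // IsCoprime (p : ℤ) (qfSubst q.out.1 (cosetRep p i)).1} : ℤ) =
        p - legendreSym p D := by
    obtain ⟨hdisc, hprim, -⟩ := q.out.2
    rw [card_isCoprime_qfSubst_cosetRep (hodd.ne_two_of_dvd_nat dvd_rfl) hprim, hdisc]
  rw [classNumber, ← Nat.card_eq_of_bijective _ hbij, natCast_card_sigma_of_card_eq hcount,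
    classNumber]
end

section
/- Let D be a positive integer and p a prime with D > p². Suppose f is a reduced binary quadratic form of discriminant −4·D·p² that is derived from the form (1,0,D) via some 2×2 integer matrix of determinant p, and that f is not equivalent to the form (1,0,D·p²). Then f = (p², 2pk, k² + D) for some integer k with −p ≤ 2k ≤ p. -/
/-- A form `(a, b, c)` of negative discriminant with `a > 0` is reduced if
`|b| ≤ a ≤ c`, and `b ≥ 0` whenever `|b| = a` or `a = c`. -/
def IsReducedQF (f : ℤ × ℤ × ℤ) : Prop :=
  0 < f.1 ∧ |f.2.1| ≤ f.1 ∧ f.1 ≤ f.2.2 ∧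
    ((|f.2.1| = f.1 ∨ f.1 = f.2.2) → 0 ≤ f.2.1)

theorem sq_sub_abs_mul_add_sq_pos {R : Type*} [CommRing R] [LinearOrder R]
    [IsStrictOrderedRing R] {x y : R} (h : x ≠ 0 ∨ y ≠ 0) :
    0 < x ^ 2 - |x * y| + y ^ 2 := by
  have hxy : 0 < x ^ 2 + y ^ 2 := by rcases h with h | h <;> positivity
  have amgm : 2 * |x * y| ≤ x ^ 2 + y ^ 2 := by
    simpa only [abs_mul, sq_abs, mul_assoc] using two_mul_le_add_sq |x| |y|
  linarith

theorem four_mul_fst_mul_qfEval (f : ℤ × ℤ × ℤ) (x y : ℤ) :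
    4 * f.1 * qfEval f x y = (2 * f.1 * x + f.2.1 * y) ^ 2 - qfDisc f * y ^ 2 := by
  simp only [qfEval, qfDisc]
  ring

theorem neg_qfDisc_le_four_mul_fst_mul_qfEval {f : ℤ × ℤ × ℤ} (hf : qfDisc f ≤ 0) (x : ℤ) {y : ℤ}
    (hy : y ≠ 0) : -qfDisc f ≤ 4 * f.1 * qfEval f x y := by
  have hy1 : 1 ≤ y ^ 2 := Order.one_le_iff_pos.mpr (by positivity)
  calc -qfDisc f ≤ -qfDisc f * y ^ 2 := le_mul_of_one_le_right (neg_nonneg.mpr hf) hy1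
    _ ≤ (2 * f.1 * x + f.2.1 * y) ^ 2 - qfDisc f * y ^ 2 := by
      linarith [sq_nonneg (2 * f.1 * x + f.2.1 * y)]
    _ = 4 * f.1 * qfEval f x y := (four_mul_fst_mul_qfEval f x y).symm

theorem QFEquiv.refl (f : ℤ × ℤ × ℤ) : QFEquiv f f :=
  ⟨1, Matrix.det_one, fun x y => by simp⟩

namespace DerivedVia

variable {f g : ℤ × ℤ × ℤ} {A : Matrix (Fin 2) (Fin 2) ℤ}

theorem eq_mk (h : DerivedVia f g A) :
    f = (qfEval g (A 0 0) (A 1 0),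
      2 * g.1 * A 0 0 * A 0 1 + g.2.1 * (A 0 0 * A 1 1 + A 0 1 * A 1 0) + 2 * g.2.2 * A 1 0 * A 1 1,
      qfEval g (A 0 1) (A 1 1)) := by
  have h10 := h 1 0
  have h01 := h 0 1
  have h11 := h 1 1
  simp only [qfEval] at h10 h01 h11
  ext <;> simp only [qfEval] <;> linarith

theorem qfEval_adjugate (h : DerivedVia f g A) :
    qfEval f (A 1 1) (-A 1 0) = A.det ^ 2 * g.1 := by
  rw [h, Matrix.det_fin_two, qfEval]
  ring

end DerivedVia

namespace IsReducedQF

variable {f g : ℤ × ℤ × ℤ} {A : Matrix (Fin 2) (Fin 2) ℤ}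

theorem fst_le_qfEval (hf : IsReducedQF f) {x y : ℤ} (hxy : x ≠ 0 ∨ y ≠ 0) :
    f.1 ≤ qfEval f x y := by
  obtain ⟨ha, hba, hac, -⟩ := hf
  have hb : -(f.1 * |x * y|) ≤ f.2.1 * (x * y) :=
    calc -(f.1 * |x * y|) ≤ -(|f.2.1| * |x * y|) := by gcongr
      _ = -|f.2.1 * (x * y)| := by rw [abs_mul f.2.1]
      _ ≤ f.2.1 * (x * y) := neg_abs_le _
  calc f.1 ≤ f.1 * (x ^ 2 - |x * y| + y ^ 2) :=
        le_mul_of_one_le_right ha.le (Order.one_le_iff_pos.mpr (sq_sub_abs_mul_add_sq_pos hxy))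
    _ = f.1 * x ^ 2 + -(f.1 * |x * y|) + f.1 * y ^ 2 := by ring
    _ ≤ f.1 * x ^ 2 + f.2.1 * (x * y) + f.2.2 * y ^ 2 := by gcongr
    _ = qfEval f x y := by rw [qfEval, mul_assoc f.2.1]

theorem apply_one_zero_eq_zero (hf : IsReducedQF f) (h : DerivedVia f g A)
    (hdisc : 4 * A.det ^ 2 * g.1 ^ 2 < -qfDisc g) : A 1 0 = 0 := by
  by_contra hA
  have hneg : 0 < -qfDisc g := lt_of_le_of_lt (by positivity) hdisc
  have hlow : -qfDisc g ≤ 4 * g.1 * f.1 := by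
    rw [congrArg Prod.fst h.eq_mk]
    exact neg_qfDisc_le_four_mul_fst_mul_qfEval (neg_pos.mp hneg).le _ hA
  have hg : 0 < 4 * g.1 := pos_of_mul_pos_left (hneg.trans_le hlow) hf.1.le
  have hmin : f.1 ≤ A.det ^ 2 * g.1 :=
    h.qfEval_adjugate ▸ hf.fst_le_qfEval (.inr (neg_ne_zero.mpr hA))
  refine hdisc.not_ge ?_
  calc -qfDisc g ≤ 4 * g.1 * f.1 := hlow
    _ ≤ 4 * g.1 * (A.det ^ 2 * g.1) := by gcongr
    _ = 4 * A.det ^ 2 * g.1 ^ 2 := by ring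

theorem two_mul_abs_le_abs {a k c : ℤ} (hf : IsReducedQF (a ^ 2, 2 * a * k, c)) :
    2 * |k| ≤ |a| := by
  have ha : 0 < |a| := abs_pos.mpr (pow_ne_zero_iff two_ne_zero |>.mp hf.1.ne')
  refine le_of_mul_le_mul_left ?_ ha
  calc |a| * (2 * |k|) = |2 * a * k| := by simp only [abs_mul, abs_two]; ring
    _ ≤ a ^ 2 := hf.2.1
    _ = |a| * |a| := by rw [← sq, sq_abs]

theorem exists_eq_of_derivedVia_one_zero {D : ℤ} (hf : IsReducedQF f)
    (h : DerivedVia f (1, 0, D) A) (hD : A.det ^ 2 < D) :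
    ∃ a d k : ℤ, 0 < a ∧ a * d = A.det ∧ f = (a ^ 2, 2 * a * k, k ^ 2 + D * d ^ 2) ∧
      2 * |k| ≤ a := by
  have hA : A 1 0 = 0 := hf.apply_one_zero_eq_zero h (by simpa [qfDisc] using hD)
  have hdet : A 0 0 * A 1 1 = A.det := by rw [Matrix.det_fin_two, hA, mul_zero, sub_zero]
  have hfA : f = (A 0 0 ^ 2, 2 * A 0 0 * A 0 1, A 0 1 ^ 2 + D * A 1 1 ^ 2) := by
    simpa [qfEval, hA] using h.eq_mk
  have hk : 2 * |A 0 1| ≤ |A 0 0| := two_mul_abs_le_abs (hfA ▸ hf)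
  have ha : A 0 0 ≠ 0 := fun h0 => by simpa [hfA, h0] using hf.1
  rcases ha.lt_or_gt with ha | ha
  · refine ⟨-A 0 0, -A 1 1, -A 0 1, neg_pos.mpr ha, by rw [neg_mul_neg, hdet], ?_, ?_⟩
    · simpa only [neg_sq, mul_neg, neg_mul, neg_neg] using hfA
    · rwa [abs_neg, ← abs_of_neg ha]
  · exact ⟨A 0 0, A 1 1, A 0 1, ha, hdet, hfA, hk.trans_eq (abs_of_pos ha)⟩

end IsReducedQF

theorem eq_one_or_eq_of_mul_eq_prime {p : ℕ} (hp : p.Prime) {a d : ℤ} (ha : 0 < a)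
    (had : a * d = p) : a = 1 ∧ d = p ∨ a = p ∧ d = 1 := by
  lift a to ℕ using ha.le
  have hdvd : a ∣ p := Int.natCast_dvd_natCast.mp (Dvd.intro d had)
  rcases (Nat.dvd_prime hp).mp hdvd with rfl | rfl
  · exact .inl ⟨Nat.cast_one, by simpa using had⟩
  · exact .inr ⟨rfl, (mul_eq_left₀ ha.ne').mp had⟩

theorem stmt8 (D : ℤ) (hD : 0 < D) (p : ℕ) (hp : p.Prime) (hDp : (p : ℤ) ^ 2 < D)
    (f : ℤ × ℤ × ℤ) (hred : IsReducedQF f) (hdisc : qfDisc f = -4 * D * (p : ℤ) ^ 2)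
    (A : Matrix (Fin 2) (Fin 2) ℤ) (hA : A.det = (p : ℤ))
    (hder : DerivedVia f (1, 0, D) A)
    (hne : ¬ QFEquiv f (1, 0, D * (p : ℤ) ^ 2)) :
    ∃ k : ℤ, f = ((p : ℤ) ^ 2, 2 * (p : ℤ) * k, k ^ 2 + D) ∧
      -(p : ℤ) ≤ 2 * k ∧ 2 * k ≤ (p : ℤ) := by
  obtain ⟨a, d, k, ha, had, rfl, hk⟩ :=
    hred.exists_eq_of_derivedVia_one_zero hder (hA.symm ▸ hDp)
  rcases eq_one_or_eq_of_mul_eq_prime hp ha (had.trans hA) with ⟨rfl, rfl⟩ | ⟨rfl, rfl⟩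
  · have hk0 : k = 0 := by rw [← Int.abs_lt_one_iff]; linarith
    refine absurd ?_ hne
    simpa [hk0] using QFEquiv.refl (1, 0, D * (p : ℤ) ^ 2)
  · refine ⟨k, by rw [one_pow, mul_one], abs_le.mp ?_⟩
    rwa [abs_mul, abs_two]
end

section
/- Let D < 0 be an integer with D ≡ 0 or 1 (mod 4) and let r be a positive integer. Let g be a primitive binary quadratic form of discriminant D with positive leading coefficient, and let f be a form of discriminant D·r² that is derived from g via some 2×2 integer matrix of determinant r. Suppose f represents an integer m with gcd(m, D·r²) = 1 and g represents an integer m' with gcd(m', D) = 1. Then for every odd prime p dividing D, the Legendre symbols satisfy (m/p) = (m'/p). -/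
/-- The form `f` represents the integer `m`. -/
def Represents (f : ℤ × ℤ × ℤ) (m : ℤ) : Prop := ∃ x y : ℤ, qfEval f x y = m

/-!
If a form `g` of discriminant `D` represents `m` and `m'`, then `4 * m * m' = s ^ 2 - D * t ^ 2`
for some integers `s` and `t`. Modulo an odd prime `p` dividing `D`, the product `m * m'` is
therefore a square, so `m` and `m'` have the same quadratic character when both are prime to `p`.
A form derived from `g` represents only integers which `g` represents, so `m` may come from any such
form.
-/

section QuadraticCharacter

variable {F : Type*} [Field F]

lemma isSquare_four_mul_iff (h2 : (2 : F) ≠ 0) {a : F} : IsSquare (4 * a) ↔ IsSquare a := by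
  have four_eq : (4 : F) = 2 * 2 := by norm_num
  have four_isSquare : IsSquare (4 : F) := ⟨2, four_eq⟩
  have four_ne_zero : (4 : F) ≠ 0 := four_eq ▸ mul_ne_zero h2 h2
  refine ⟨fun h ↦ ?_, four_isSquare.mul⟩
  simpa only [mul_div_cancel_left₀ a four_ne_zero] using h.div four_isSquare

lemma quadraticChar_eq_of_isSquare_mul [Fintype F] [DecidableEq F] {a b : F}
    (ha : a ≠ 0) (hb : b ≠ 0) (hab : IsSquare (a * b)) :
    quadraticChar F a = quadraticChar F b := by
  have mul_eq_one : quadraticChar F a * quadraticChar F b = 1 := by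
    rw [← map_mul, quadraticChar_one_iff_isSquare (mul_ne_zero ha hb)]
    exact hab
  exact Int.eq_of_mul_eq_one mul_eq_one

end QuadraticCharacter

/-- The polar form `g(x + z, y + w) - g(x, y) - g(z, w)` of the binary quadratic form `g`, as a
function of the vectors `(x, y)` and `(z, w)`. It links the values of `g` at the two vectors to the
discriminant of `g`. With this normalization, which avoids halves, it is `2 * g(x, y)` on the
diagonal. -/
def qfPolar (g : ℤ × ℤ × ℤ) (x y z w : ℤ) : ℤ :=
  2 * g.1 * x * z + g.2.1 * (x * w + y * z) + 2 * g.2.2 * y * w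

-- Rearranged, this computes the discriminant of the form derived from `g` via the matrix with
-- columns `(x, y)` and `(z, w)`, whose coefficients are `g(x, y)`, the polar form and `g(z, w)`.
lemma four_mul_qfEval_mul_qfEval (g : ℤ × ℤ × ℤ) (x y z w : ℤ) :
    4 * qfEval g x y * qfEval g z w =
      qfPolar g x y z w ^ 2 - qfDisc g * (x * w - y * z) ^ 2 := by
  simp only [qfEval, qfPolar, qfDisc]
  ring

section Representation

variable {f g : ℤ × ℤ × ℤ} {m m' : ℤ}

lemma DerivedVia.represents {A : Matrix (Fin 2) (Fin 2) ℤ} (hfg : DerivedVia f g A)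
    (hm : Represents f m) : Represents g m := by
  obtain ⟨x, y, hxy⟩ := hm
  exact ⟨_, _, (hfg x y).symm.trans hxy⟩

lemma Represents.isSquare_four_mul_mul {n : ℕ} (hn : (n : ℤ) ∣ qfDisc g)
    (hm : Represents g m) (hm' : Represents g m') :
    IsSquare (4 * m * m' : ZMod n) := by
  obtain ⟨x, y, rfl⟩ := hm
  obtain ⟨z, w, rfl⟩ := hm'
  have disc_eq_zero : (qfDisc g : ZMod n) = 0 := (ZMod.intCast_zmod_eq_zero_iff_dvd _ n).2 hn
  have identity := congrArg (Int.cast : ℤ → ZMod n) (four_mul_qfEval_mul_qfEval g x y z w)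
  push_cast at identity
  rw [identity, disc_eq_zero, zero_mul, sub_zero]
  exact IsSquare.sq _

end Representation

lemma Represents.legendreSym_eq {p : ℕ} [Fact p.Prime] (hp : Odd p) {g : ℤ × ℤ × ℤ}
    (hpg : (p : ℤ) ∣ qfDisc g) {m m' : ℤ} (hm : Represents g m) (hm' : Represents g m')
    (hmp : IsCoprime m p) (hm'p : IsCoprime m' p) :
    legendreSym p m = legendreSym p m' := by
  have ne_zero_of_coprime {k : ℤ} (hk : IsCoprime k p) : (k : ZMod p) ≠ 0 :=
    ((ZMod.coe_int_isUnit_iff_isCoprime k p).2 hk.symm).ne_zero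
  have two_ne_zero : (2 : ZMod p) ≠ 0 := by
    have : IsUnit ((2 : ℕ) : ZMod p) := (ZMod.isUnit_iff_coprime 2 p).2 hp.coprime_two_left
    exact_mod_cast this.ne_zero
  have mul_isSquare : IsSquare (m * m' : ZMod p) := by
    rw [← isSquare_four_mul_iff two_ne_zero, ← mul_assoc]
    exact hm.isSquare_four_mul_mul hpg hm'
  exact quadraticChar_eq_of_isSquare_mul
    (ne_zero_of_coprime hmp) (ne_zero_of_coprime hm'p) mul_isSquare

theorem stmt13_general {p : ℕ} [Fact p.Prime] (hp : Odd p) {f g : ℤ × ℤ × ℤ}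
    (hpg : (p : ℤ) ∣ qfDisc g) {A : Matrix (Fin 2) (Fin 2) ℤ} (hfg : DerivedVia f g A)
    {m m' : ℤ} (hm : Represents f m) (hm' : Represents g m')
    (hmp : IsCoprime m p) (hm'p : IsCoprime m' p) :
    legendreSym p m = legendreSym p m' :=
  (hfg.represents hm).legendreSym_eq hp hpg hm' hmp hm'p

theorem stmt13 (D : ℤ) (hD : D < 0) (hDmod : D % 4 = 0 ∨ D % 4 = 1)
    (r : ℕ) (hr : 0 < r)
    (g : ℤ × ℤ × ℤ) (hgp : IsPrimitiveQF g) (hgl : 0 < g.1) (hgd : qfDisc g = D)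
    (f : ℤ × ℤ × ℤ) (hfd : qfDisc f = D * (r : ℤ) ^ 2)
    (A : Matrix (Fin 2) (Fin 2) ℤ) (hA : A.det = (r : ℤ))
    (hder : DerivedVia f g A)
    (m m' : ℤ) (hm : Represents f m) (hm' : Represents g m')
    (hmD : Int.gcd m (D * (r : ℤ) ^ 2) = 1) (hm'D : Int.gcd m' D = 1) :
    ∀ (p : ℕ) (hp : p.Prime), Odd p → (p : ℤ) ∣ D →
      @legendreSym p ⟨hp⟩ m = @legendreSym p ⟨hp⟩ m' := by
  intro p hp hodd hpD
  have : Fact p.Prime := ⟨hp⟩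
  exact stmt13_general hodd (hgd ▸ hpD) hder hm hm'
    ((Int.isCoprime_iff_gcd_eq_one.2 hmD).of_isCoprime_of_dvd_right (hpD.mul_right _))
    ((Int.isCoprime_iff_gcd_eq_one.2 hm'D).of_isCoprime_of_dvd_right hpD)
end
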